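/- Let ω̃ and ω be Kähler metrics on a complex manifold M with Ric ω̃ ≥ −ω̃ and the holomorphic bisectional curvature of ω bounded above by a constant C₁ > 0. Then the function v := log tr_{ω̃} ω satisfies the differential inequality Δ_{ω̃} v ≥ −1 − 2C₁ e^{v} on M. -/

import Mathlib

open MeasureTheory Filter Topology
open scoped ComplexOrder

noncomputable section

abbrev Cn (n : ℕ) := Fin n → ℂ

/-- Wirtinger derivative `∂/∂z_k`. -/
def wder {n : ℕ} (k : Fin n) (F : Cn n → ℂ) (z : Cn n) : ℂ :=
  (1 / 2) * (fderiv ℝ F z (Pi.single k 1) - Complex.I * fderiv ℝ F z (Pi.single k Complex.I))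

/-- Wirtinger derivative `∂/∂z̄_k`. -/
def wbar {n : ℕ} (k : Fin n) (F : Cn n → ℂ) (z : Cn n) : ℂ :=
  (1 / 2) * (fderiv ℝ F z (Pi.single k 1) + Complex.I * fderiv ℝ F z (Pi.single k Complex.I))

/-- A Kähler metric on an open set `Ω ⊆ ℂⁿ`, given by its matrix of coefficients
`g_{i j̄}`: smooth, pointwise positive definite, and `d`-closed (`∂_k g_{i j̄} = ∂_i g_{k j̄}`). -/
structure IsKahlerMetricOn {n : ℕ} (g : Cn n → Matrix (Fin n) (Fin n) ℂ)
    (Ω : Set (Cn n)) : Prop where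
  smooth : ∀ i j, ContDiffOn ℝ (⊤ : ℕ∞) (fun z => g z i j) Ω
  posdef : ∀ z ∈ Ω, (g z).PosDef
  kahler : ∀ z ∈ Ω, ∀ i j k, wder k (fun w => g w i j) z = wder i (fun w => g w k j) z

/-- Ricci curvature `Ric_{i j̄} = −∂_i ∂̄_j log det g` of a Kähler metric `g`. -/
def RicciM {n : ℕ} (g : Cn n → Matrix (Fin n) (Fin n) ℂ) (z : Cn n) :
    Matrix (Fin n) (Fin n) ℂ :=
  Matrix.of fun i j => -wder i (fun w => wbar j (fun y => Complex.log (g y).det) w) z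

/-- Curvature tensor `R_{i j̄ k l̄} = −∂_k ∂̄_l g_{i j̄} + g^{p q̄} (∂_k g_{i q̄})(∂̄_l g_{p j̄})`. -/
def curvT {n : ℕ} (g : Cn n → Matrix (Fin n) (Fin n) ℂ) (z : Cn n)
    (i j k l : Fin n) : ℂ :=
  -wder k (fun w => wbar l (fun y => g y i j) w) z +
    ∑ p : Fin n, ∑ q : Fin n,
      (g z)⁻¹ q p * wder k (fun w => g w i q) z * wbar l (fun w => g w p j) z

/-- Hermitian pairing `⟨ξ, η⟩_g = ∑ g_{i j̄} ξ_i η̄_j`. -/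
def herm {n : ℕ} (g : Cn n → Matrix (Fin n) (Fin n) ℂ) (z : Cn n) (ξ η : Fin n → ℂ) : ℂ :=
  ∑ i : Fin n, ∑ j : Fin n, g z i j * ξ i * star (η j)

/-- Complex Laplacian `Δ_g v = g^{i j̄} ∂_i ∂̄_j v` of a real-valued function `v`. -/
def cLap {n : ℕ} (g : Cn n → Matrix (Fin n) (Fin n) ℂ) (v : Cn n → ℝ) (z : Cn n) : ℝ :=
  (∑ i : Fin n, ∑ j : Fin n,
    (g z)⁻¹ j i * wder i (fun w => wbar j (fun y => ((v y : ℂ))) w) z).re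

/-
Write `h = ω̃`, `g = ω`, `H = h⁻¹` and `T = tr (H g)`. With the covariant derivative
`∇_k g = ∂_k g - ∂_k h h⁻¹ g`, every second derivative of the metrics is absorbed by curvature:
`∂_k ∂̄_l T = tr (H R^h_{k l̄} H g) - tr (H R^g_{k l̄}) + tr (H ∇_k g g⁻¹ (∇_l g)*)`.
Contract with `H`. The Kähler symmetry `R_{i j̄ k l̄} = R_{k l̄ i j̄}` turns the first term into
`tr (H Ric H g) ≥ -T`. The second is at most `C₁ T²`, because the positive matrix `H` is a sum of
rank-one matrices and the bisectional bound applies to each pair of them. The third dominates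
`|∂T|² / T` by Cauchy–Schwarz, and `Δ log T = (Δ T - |∂T|² / T) / T`.
-/

section TraceInequalities

open Matrix

variable {ι κ 𝕜 : Type*} [Fintype ι] [RCLike 𝕜]

lemma exists_trace_mul_eq_sum_dotProduct {P : Matrix ι ι 𝕜} (hP : P.PosSemidef) :
    ∃ (m : ℕ) (v : Fin m → ι → 𝕜), ∀ M, (P * M).trace = ∑ a, star (v a) ⬝ᵥ M *ᵥ v a := by
  obtain ⟨m, v, rfl⟩ := posSemidef_iff_eq_sum_vecMulVec.1 hP
  refine ⟨m, v, fun M => ?_⟩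
  simp only [Finset.sum_mul, trace_sum, vecMulVec_mul, trace_vecMulVec]
  exact Finset.sum_congr rfl fun a _ => by rw [dotProduct_comm, dotProduct_mulVec]

lemma trace_mul_nonneg_of_posSemidef {P N : Matrix ι ι 𝕜} (hP : P.PosSemidef)
    (hN : N.PosSemidef) : 0 ≤ (P * N).trace := by
  obtain ⟨m, v, hv⟩ := exists_trace_mul_eq_sum_dotProduct hP
  rw [hv]
  exact Finset.sum_nonneg fun a _ => hN.dotProduct_mulVec_nonneg (v a)

lemma trace_mul_pos_of_posDef [Nonempty ι] {P N : Matrix ι ι 𝕜} (hP : P.PosDef)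
    (hN : N.PosDef) : 0 < (P * N).trace := by
  classical
  obtain ⟨B, hB, rfl⟩ : ∃ B, IsUnit B ∧ P = star B * B := by
    open scoped MatrixOrder in
    exact CStarAlgebra.isStrictlyPositive_iff_eq_star_mul_self.1 hP.isStrictlyPositive
  rw [mul_assoc, trace_mul_comm]
  exact (hN.mul_mul_conjTranspose_same (vecMul_injective_of_isUnit hB)).trace_pos

lemma re_trace_mul_le_of_forall_dotProduct {P M N : Matrix ι ι 𝕜} (hP : P.PosSemidef) {c : ℝ}
    (h : ∀ x : ι → 𝕜, RCLike.re (star x ⬝ᵥ M *ᵥ x) ≤ c * RCLike.re (star x ⬝ᵥ N *ᵥ x)) :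
    RCLike.re (P * M).trace ≤ c * RCLike.re (P * N).trace := by
  obtain ⟨m, v, hv⟩ := exists_trace_mul_eq_sum_dotProduct hP
  simp only [hv, map_sum, Finset.mul_sum]
  exact Finset.sum_le_sum fun a _ => h (v a)

lemma re_trace_mul_of_trace_mul_le [Fintype κ] {P N : Matrix κ κ 𝕜} {Q M : Matrix ι ι 𝕜}
    {R : κ → κ → Matrix ι ι 𝕜} (hP : P.PosSemidef) (hQ : Q.PosSemidef) {c : ℝ}
    (h : ∀ (x : ι → 𝕜) (y : κ → 𝕜),
      RCLike.re (star x ⬝ᵥ (∑ k, ∑ l, (star (y k) * y l) • R k l) *ᵥ x) ≤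
        c * RCLike.re (star x ⬝ᵥ M *ᵥ x) * RCLike.re (star y ⬝ᵥ N *ᵥ y)) :
    RCLike.re (P * of fun k l => (Q * R k l).trace).trace ≤
      c * RCLike.re (Q * M).trace * RCLike.re (P * N).trace := by
  refine re_trace_mul_le_of_forall_dotProduct hP fun y => ?_
  have hy : star y ⬝ᵥ (of fun k l => (Q * R k l).trace) *ᵥ y =
      (Q * ∑ k, ∑ l, (star (y k) * y l) • R k l).trace := by
    simp only [dotProduct, mulVec, of_apply, Pi.star_apply, Finset.mul_sum, trace_sum,
      Matrix.mul_smul, trace_smul, smul_eq_mul]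
    exact Finset.sum_congr rfl fun _ _ => Finset.sum_congr rfl fun _ _ => by ring
  rw [hy, mul_right_comm]
  exact re_trace_mul_le_of_forall_dotProduct hQ fun x => (h x y).trans_eq (by ring)

lemma trace_mul_eq_sum_sum {S : Type*} [CommSemiring S] (P M : Matrix ι ι S) :
    (P * M).trace = ∑ k, ∑ l, P l k * M k l := by
  simp only [trace, diag, mul_apply]
  exact Finset.sum_comm

lemma trace_mul_of_trace_mul_mul [Fintype κ] {S : Type*} [CommSemiring S] (P : Matrix κ κ S)
    (A B : Matrix ι ι S) (R : κ → κ → Matrix ι ι S) :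
    (P * of fun k l => (A * R k l * B).trace).trace =
      (A * (∑ k, ∑ l, P l k • R k l) * B).trace := by
  simp only [trace_mul_eq_sum_sum P, of_apply, Finset.mul_sum, Finset.sum_mul, trace_sum,
    Matrix.mul_smul, Matrix.smul_mul, trace_smul, smul_eq_mul]

lemma star_trace_mul_of_isHermitian {S : Type*} [CommSemiring S] [StarRing S] {P : Matrix ι ι S}
    (hP : P.IsHermitian) (X : Matrix ι ι S) : star (P * X).trace = (P * Xᴴ).trace := by
  rw [← trace_conjTranspose, conjTranspose_mul, hP.eq, trace_mul_comm]

/-- The Gram matrix of the family `X` for the semi-inner product `⟨A, B⟩ = tr (P A N Bᴴ)` on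
matrices. -/
def traceGram (P N : Matrix ι ι 𝕜) (X : κ → Matrix ι ι 𝕜) : Matrix κ κ 𝕜 :=
  of fun k l => (P * X k * N * (X l)ᴴ).trace

lemma star_dotProduct_traceGram_mulVec [Fintype κ] (P N : Matrix ι ι 𝕜)
    (X : κ → Matrix ι ι 𝕜) (x : κ → 𝕜) :
    star x ⬝ᵥ traceGram P N X *ᵥ x =
      (P * ((∑ k, star (x k) • X k) * N * (∑ k, star (x k) • X k)ᴴ)).trace := by
  simp only [dotProduct, mulVec, traceGram, of_apply, Pi.star_apply, conjTranspose_sum,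
    conjTranspose_smul, star_star, Finset.sum_mul, Finset.mul_sum, trace_sum, Matrix.smul_mul,
    Matrix.mul_smul, trace_smul, smul_eq_mul, mul_assoc]
  rw [Finset.sum_comm]
  exact Finset.sum_congr rfl fun _ _ => Finset.sum_congr rfl fun _ _ => by ring

lemma posSemidef_traceGram [Finite κ] {P N : Matrix ι ι 𝕜} (hP : P.PosSemidef)
    (hN : N.PosSemidef) (X : κ → Matrix ι ι 𝕜) : (traceGram P N X).PosSemidef := by
  have := Fintype.ofFinite κ
  refine .of_dotProduct_mulVec_nonneg ?_ fun x => ?_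
  · ext k l
    rw [conjTranspose_apply, traceGram, of_apply, of_apply]
    simp only [mul_assoc]
    rw [star_trace_mul_of_isHermitian hP.isHermitian]
    simp only [conjTranspose_mul, conjTranspose_conjTranspose, hN.isHermitian.eq, mul_assoc]
  · rw [star_dotProduct_traceGram_mulVec]
    exact trace_mul_nonneg_of_posSemidef hP (hN.mul_mul_conjTranspose_same _)

/- Cauchy–Schwarz for `traceGram P g⁻¹`: the vector `g` has square norm `tr (P g)` and pairs with
`X k` to `tr (P X k)`, so this is the Gram matrix of the projections of the `X k` to the
orthogonal complement of `g`. -/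
lemma posSemidef_traceGram_inv_sub [Finite κ] [DecidableEq ι] {P g : Matrix ι ι 𝕜}
    (hP : P.PosSemidef) (hg : g.PosDef) (X : κ → Matrix ι ι 𝕜) :
    (traceGram P g⁻¹ X - (P * g).trace⁻¹ •
      vecMulVec (fun k => (P * X k).trace) (fun l => (P * (X l)ᴴ).trace)).PosSemidef := by
  set T := (P * g).trace with hT
  have hT_star : star T = T := by
    rw [star_trace_mul_of_isHermitian hP.isHermitian, hg.isHermitian.eq]
  have hmul : g * g⁻¹ = 1 := mul_nonsing_inv _ hg.det_pos.ne'.isUnit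
  have hinv : g⁻¹ * g = 1 := nonsing_inv_mul _ hg.det_pos.ne'.isUnit
  have hmul' (A : Matrix ι ι 𝕜) : g * (g⁻¹ * A) = A := by rw [← mul_assoc, hmul, one_mul]
  convert posSemidef_traceGram hP hg.posSemidef.inv fun k => X k - (T⁻¹ * (P * X k).trace) • g
    using 1
  ext k l
  simp only [traceGram, Matrix.sub_apply, Matrix.smul_apply, of_apply, vecMulVec_apply,
    smul_eq_mul, conjTranspose_sub, conjTranspose_smul, hg.isHermitian.eq, star_mul', star_inv₀,
    hT_star, star_trace_mul_of_isHermitian hP.isHermitian, mul_sub, sub_mul, Matrix.mul_smul,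
    Matrix.smul_mul, trace_sub, trace_smul, mul_assoc, hmul', hinv, mul_one, ← hT]
  rcases eq_or_ne T 0 with h | h
  · simp [h]
  · field_simp
    ring

end TraceInequalities

section ComplexDirectionalDerivative

variable {E V W : Type*} [NormedAddCommGroup E] [NormedSpace ℝ E] [NormedAddCommGroup V]
  [NormedSpace ℂ V] [NormedAddCommGroup W] [NormedSpace ℂ W] {X Y : E × E} {z : E}

/-- The derivative of `F` along the complexified tangent vector `X.1 + i X.2`. Wirtinger
derivatives are the directions `(e / 2, ∓ i e / 2)`. -/
def cderiv (X : E × E) (F : E → W) (z : E) : W :=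
  fderiv ℝ F z X.1 + Complex.I • fderiv ℝ F z X.2

lemma cderiv_congr {F G : E → W} (h : F =ᶠ[𝓝 z] G) : cderiv X F z = cderiv X G z := by
  rw [cderiv, cderiv, h.fderiv_eq]

lemma cderiv_sub {F G : E → W} (hF : DifferentiableAt ℝ F z) (hG : DifferentiableAt ℝ G z) :
    cderiv X (fun w => F w - G w) z = cderiv X F z - cderiv X G z := by
  simp only [cderiv, fderiv_fun_sub hF hG, sub_apply, smul_sub]
  abel

lemma cderiv_mul {A : Type*} [NormedRing A] [NormedAlgebra ℂ A] {F G : E → A}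
    (hF : DifferentiableAt ℝ F z) (hG : DifferentiableAt ℝ G z) :
    cderiv X (fun w => F w * G w) z = F z * cderiv X G z + cderiv X F z * G z := by
  have h := hF.hasFDerivAt.mul' hG.hasFDerivAt
  simp only [cderiv, ← Pi.mul_def F G, h.fderiv, add_apply, smul_apply, smul_eq_mul,
    MulOpposite.smul_eq_mul_unop, MulOpposite.unop_op, smul_add, mul_add, add_mul, mul_smul_comm,
    smul_mul_assoc]
  abel

lemma cderiv_comp {Φ : V → W} {Φ' : V →L[ℂ] W} {F : E → V} (hΦ : HasFDerivAt Φ Φ' (F z))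
    (hF : DifferentiableAt ℝ F z) : cderiv X (fun w => Φ (F w)) z = Φ' (cderiv X F z) := by
  have h := (hΦ.restrictScalars ℝ).comp z hF.hasFDerivAt
  simp only [cderiv, ← Function.comp_def Φ F, h.fderiv, ContinuousLinearMap.comp_apply,
    ContinuousLinearMap.coe_restrictScalars', map_add, map_smul]

lemma cderiv_star [StarAddMonoid W] [StarModule ℂ W] [ContinuousStar W] {F : E → W} :
    cderiv (X.1, -X.2) (fun w => star (F w)) z = star (cderiv X F z) := by
  simp [cderiv, fderiv_star, star_smul]

lemma contDiffAt_cderiv {F : E → W} {m n : WithTop ℕ∞} (hF : ContDiffAt ℝ n F z)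
    (hmn : m + 1 ≤ n) : ContDiffAt ℝ m (cderiv X F) z := by
  have h := hF.fderiv_right hmn
  exact (h.clm_apply contDiffAt_const).add ((h.clm_apply contDiffAt_const).const_smul Complex.I)

lemma differentiableAt_cderiv {F : E → W} (hF : ContDiffAt ℝ 2 F z) :
    DifferentiableAt ℝ (cderiv X F) z :=
  (contDiffAt_cderiv (m := 1) hF le_rfl).differentiableAt one_ne_zero

lemma cderiv_comm {F : E → W} (hF : ContDiffAt ℝ 2 F z) :
    cderiv X (cderiv Y F) z = cderiv Y (cderiv X F) z := by
  have hF' : DifferentiableAt ℝ (fderiv ℝ F) z :=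
    (hF.fderiv_right (m := 1) le_rfl).differentiableAt one_ne_zero
  have hsymm : IsSymmSndFDerivAt ℝ F z := hF.isSymmSndFDerivAt (by simp)
  have key (Y : E × E) (v : E) : fderiv ℝ (cderiv Y F) z v =
      fderiv ℝ (fderiv ℝ F) z v Y.1 + Complex.I • fderiv ℝ (fderiv ℝ F) z v Y.2 := by
    have h (y : E) := hF'.hasFDerivAt.clm_apply (hasFDerivAt_const y z)
    have hadd : HasFDerivAt (cderiv Y F) _ z := (h Y.1).add ((h Y.2).const_smul Complex.I)
    simp [hadd.fderiv]
  rw [cderiv, cderiv, key, key, key, key, hsymm.eq X.1, hsymm.eq X.1, hsymm.eq X.2, hsymm.eq X.2]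
  simp only [smul_add]
  abel

lemma cderiv_log {T : E → ℂ} (hT : DifferentiableAt ℝ T z) (hz : T z ∈ Complex.slitPlane) :
    cderiv X (fun w => Complex.log (T w)) z = (T z)⁻¹ * cderiv X T z := by
  simpa [mul_comm] using cderiv_comp (X := X) (Complex.hasDerivAt_log hz).hasFDerivAt hT

lemma cderiv_cderiv_log {T : E → ℂ} (hT : ContDiffAt ℝ 2 T z) (hz : T z ∈ Complex.slitPlane) :
    cderiv X (cderiv Y fun w => Complex.log (T w)) z =
      (T z)⁻¹ * (cderiv X (cderiv Y T) z - (T z)⁻¹ * (cderiv X T z * cderiv Y T z)) := by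
  have hne := Complex.slitPlane_ne_zero hz
  have hT1 := hT.differentiableAt two_ne_zero
  have hlog : ContDiffAt ℝ 2 (fun w => Complex.log (T w)) z :=
    ((Complex.contDiffAt_log hz).restrict_scalars ℝ).comp z hT
  have hmul : (fun w => T w * cderiv Y (fun y => Complex.log (T y)) w) =ᶠ[𝓝 z] cderiv Y T := by
    filter_upwards [hT.eventually (by simp), hT.continuousAt.eventually_mem
      (Complex.isOpen_slitPlane.mem_nhds hz)] with w hw hmem
    rw [cderiv_log (hw.differentiableAt two_ne_zero) hmem,
      mul_inv_cancel_left₀ (Complex.slitPlane_ne_zero hmem)]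
  rw [← cderiv_congr hmul, cderiv_mul hT1 (differentiableAt_cderiv hlog), cderiv_log hT1 hz]
  field_simp
  ring

end ComplexDirectionalDerivative

section MatrixValuedFunctions

open Matrix
open scoped Matrix.Norms.L2Operator

lemma hasFDerivAt_det {ι 𝕜 : Type*} [Fintype ι] [DecidableEq ι] [NontriviallyNormedField 𝕜]
    [CompleteSpace 𝕜] (A : Matrix ι ι 𝕜) :
    HasFDerivAt det
      (traceLinearMap ι 𝕜 𝕜 ∘ₗ LinearMap.mulLeft 𝕜 A.adjugate).toContinuousLinearMap A := by
  let f : ContinuousMultilinearMap 𝕜 (fun _ : ι => ι → 𝕜) 𝕜 :=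
    { detRowAlternating.toMultilinearMap with cont := Continuous.matrix_det continuous_id }
  have hupdate (B : Matrix ι ι 𝕜) (i : ι) :
      f (Function.update A i (B i)) = (B * A.adjugate) i i :=
    calc (A.updateRow i (B i)).det = (Aᵀ.adjugate *ᵥ B i) i := by
          rw [← cramer_transpose_apply, cramer_eq_adjugate_mulVec]
      _ = (B * A.adjugate) i i := by rw [← adjugate_transpose, mulVec_transpose]; rfl
  have hf : f.linearDeriv A =
      (traceLinearMap ι 𝕜 𝕜 ∘ₗ LinearMap.mulLeft 𝕜 A.adjugate).toContinuousLinearMap :=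
    ContinuousLinearMap.ext fun B : Matrix ι ι 𝕜 =>
      (f.linearDeriv_apply A B).trans <|
        (Finset.sum_congr rfl fun i _ => hupdate B i).trans (trace_mul_comm B A.adjugate)
  exact hf ▸ f.hasFDerivAt A

variable {E : Type*} [NormedAddCommGroup E] [NormedSpace ℝ E] {X Y : E × E} {z : E}
  {ι : Type*} [Fintype ι] [DecidableEq ι] {M g h : E → Matrix ι ι ℂ}

lemma cderiv_apply (hM : DifferentiableAt ℝ M z) (i j : ι) :
    cderiv X (fun w => M w i j) z = cderiv X M z i j :=
  cderiv_comp (entryLinearMap ℂ ℂ i j).toContinuousLinearMap.hasFDerivAt hM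

lemma cderiv_trace (hM : DifferentiableAt ℝ M z) :
    cderiv X (fun w => (M w).trace) z = (cderiv X M z).trace :=
  cderiv_comp (traceLinearMap ι ℂ ℂ).toContinuousLinearMap.hasFDerivAt hM

lemma cderiv_log_det (hM : DifferentiableAt ℝ M z) (hz : (M z).det ∈ Complex.slitPlane) :
    cderiv X (fun w => Complex.log (M w).det) z = ((M z)⁻¹ * cderiv X M z).trace := by
  have hdet : DifferentiableAt ℝ (fun w => (M w).det) z :=
    (((hasFDerivAt_det (M z)).restrictScalars ℝ).comp z hM.hasFDerivAt).differentiableAt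
  rw [cderiv_log hdet hz, cderiv_comp (hasFDerivAt_det (M z)) hM, inv_def, Ring.inverse_eq_inv']
  simp

lemma cderiv_matrix_inv (hM : DifferentiableAt ℝ M z) (hz : IsUnit (M z)) :
    cderiv X (fun w => (M w)⁻¹) z = -((M z)⁻¹ * cderiv X M z * (M z)⁻¹) := by
  obtain ⟨u, hu⟩ := hz
  simp only [nonsing_inv_eq_ringInverse]
  rw [cderiv_comp (hu ▸ hasFDerivAt_ringInverse (𝕜 := ℂ) u) hM, ← hu]
  simp

lemma differentiableAt_matrix_inv (hM : DifferentiableAt ℝ M z) (hz : IsUnit (M z)) :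
    DifferentiableAt ℝ (fun w => (M w)⁻¹) z := by
  simp only [nonsing_inv_eq_ringInverse]
  exact (differentiableAt_inverse hz).comp z hM

lemma contDiffAt_matrix_inv {n : WithTop ℕ∞} (hM : ContDiffAt ℝ n M z) (hz : IsUnit (M z)) :
    ContDiffAt ℝ n (fun w => (M w)⁻¹) z := by
  obtain ⟨u, hu⟩ := hz
  simp only [nonsing_inv_eq_ringInverse]
  exact (hu ▸ contDiffAt_ringInverse ℝ u : ContDiffAt ℝ n Ring.inverse (M z)).comp z hM

lemma contDiffAt_matrix {n : WithTop ℕ∞} (hM : ∀ i j, ContDiffAt ℝ n (fun w => M w i j) z) :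
    ContDiffAt ℝ n M z := by
  have hsum : M = fun w => ∑ i, ∑ j, M w i j • single i j (1 : ℂ) := by
    funext w
    simpa using matrix_eq_sum_single (M w)
  rw [hsum]
  exact ContDiffAt.sum fun i _ => ContDiffAt.sum fun j _ => (hM i j).smul contDiffAt_const

lemma cderiv_conjTranspose (hM : ∀ᶠ w in 𝓝 z, (M w).IsHermitian) :
    (cderiv X M z)ᴴ = cderiv (X.1, -X.2) M z := by
  rw [← star_eq_conjTranspose, ← cderiv_star]
  exact cderiv_congr (hM.mono fun w hw => hw.eq)

/-- The covariant derivative `∂_X M - ∂_X h h⁻¹ M` of `M` along `X`, where the row index of `M` is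
paired with the Chern connection of the Hermitian metric `h`. -/
def covDeriv (h M : E → Matrix ι ι ℂ) (X : E × E) (z : E) : Matrix ι ι ℂ :=
  cderiv X M z - cderiv X h z * (h z)⁻¹ * M z

lemma covDeriv_conjTranspose (hh : ∀ᶠ w in 𝓝 z, (h w).IsHermitian)
    (hM : ∀ᶠ w in 𝓝 z, (M w).IsHermitian) :
    (covDeriv h M X z)ᴴ =
      cderiv (X.1, -X.2) M z - M z * (h z)⁻¹ * cderiv (X.1, -X.2) h z := by
  simp only [covDeriv, conjTranspose_sub, conjTranspose_mul, cderiv_conjTranspose hM,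
    cderiv_conjTranspose hh, hM.self_of_nhds.eq, hh.self_of_nhds.inv.eq, mul_assoc]

/-- The Chern curvature `-∂_X ∂_Y g + ∂_X g g⁻¹ ∂_Y g` of the Hermitian metric `g`, with both
bundle indices lowered, for `X` of type `(1, 0)` and `Y` of type `(0, 1)`. -/
def chernCurv (g : E → Matrix ι ι ℂ) (X Y : E × E) (z : E) : Matrix ι ι ℂ :=
  -cderiv X (cderiv Y g) z + cderiv X g z * (g z)⁻¹ * cderiv Y g z

lemma cderiv_inv_mul (hh : DifferentiableAt ℝ h z) (hM : DifferentiableAt ℝ M z)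
    (hz : IsUnit (h z)) :
    cderiv X (fun w => (h w)⁻¹ * M w) z = (h z)⁻¹ * covDeriv h M X z := by
  rw [cderiv_mul (differentiableAt_matrix_inv hh hz) hM, cderiv_matrix_inv hh hz, covDeriv]
  noncomm_ring

lemma cderiv_trace_inv_mul (hh : DifferentiableAt ℝ h z) (hM : DifferentiableAt ℝ M z)
    (hz : IsUnit (h z)) :
    cderiv X (fun w => ((h w)⁻¹ * M w).trace) z = ((h z)⁻¹ * covDeriv h M X z).trace := by
  rw [cderiv_trace ((differentiableAt_matrix_inv hh hz).fun_mul hM), cderiv_inv_mul hh hM hz]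

lemma cderiv_cderiv_log_det (hh : ContDiffAt ℝ 2 h z) (hz : (h z).det ∈ Complex.slitPlane) :
    cderiv X (cderiv Y fun w => Complex.log (h w).det) z =
      -((h z)⁻¹ * chernCurv h X Y z).trace := by
  have hhz : IsUnit (h z) :=
    (isUnit_iff_isUnit_det _).2 (Complex.slitPlane_ne_zero hz).isUnit
  have hdet : ContinuousAt (fun w => (h w).det) z :=
    (continuous_id.matrix_det.continuousAt).comp hh.continuousAt
  have hlog : cderiv Y (fun w => Complex.log (h w).det) =ᶠ[𝓝 z]
      fun w => ((h w)⁻¹ * cderiv Y h w).trace := by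
    filter_upwards [hh.eventually (by simp),
      hdet.eventually_mem (Complex.isOpen_slitPlane.mem_nhds hz)] with w hw hmem
    exact cderiv_log_det (hw.differentiableAt two_ne_zero) hmem
  rw [cderiv_congr hlog, cderiv_trace_inv_mul (hh.differentiableAt two_ne_zero)
    (differentiableAt_cderiv hh) hhz, covDeriv, chernCurv, ← trace_neg]
  congr 1
  noncomm_ring

lemma covDeriv_covDeriv (hh : ContDiffAt ℝ 2 h z) (hg : ContDiffAt ℝ 2 g z)
    (hhz : IsUnit (h z)) (hgz : IsUnit (g z)) :
    covDeriv h (covDeriv h g Y) X z =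
      chernCurv h X Y z * (h z)⁻¹ * g z - chernCurv g X Y z +
        covDeriv h g X z * (g z)⁻¹ * cderiv Y g z -
        cderiv Y h z * (h z)⁻¹ * covDeriv h g X z := by
  have hh1 : DifferentiableAt ℝ h z := hh.differentiableAt two_ne_zero
  have hg1 : DifferentiableAt ℝ g z := hg.differentiableAt two_ne_zero
  have hhg : DifferentiableAt ℝ (fun w => (h w)⁻¹ * g w) z :=
    (differentiableAt_matrix_inv hh1 hhz).mul hg1
  have hcov : cderiv X (covDeriv h g Y) z = cderiv X (cderiv Y g) z -
      (cderiv Y h z * ((h z)⁻¹ * covDeriv h g X z) +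
        cderiv X (cderiv Y h) z * ((h z)⁻¹ * g z)) := by
    simp only [funext fun w => show covDeriv h g Y w =
      cderiv Y g w - cderiv Y h w * ((h w)⁻¹ * g w) by rw [covDeriv, mul_assoc]]
    rw [cderiv_sub (differentiableAt_cderiv hg) ((differentiableAt_cderiv hh).fun_mul hhg),
      cderiv_mul (differentiableAt_cderiv hh) hhg, cderiv_inv_mul hh1 hg1 hhz]
  have hcancel (A : Matrix ι ι ℂ) : g z * ((g z)⁻¹ * A) = A :=
    mul_nonsing_inv_cancel_left _ _ ((isUnit_iff_isUnit_det _).1 hgz)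
  rw [covDeriv, hcov]
  simp only [covDeriv, chernCurv, add_mul, sub_mul, mul_sub, neg_mul, mul_assoc, hcancel]
  abel

lemma cderiv_cderiv_trace_inv_mul (hh : ContDiffAt ℝ 2 h z) (hg : ContDiffAt ℝ 2 g z)
    (hhz : IsUnit (h z)) (hgz : IsUnit (g z)) :
    cderiv X (cderiv Y fun w => ((h w)⁻¹ * g w).trace) z =
      ((h z)⁻¹ * (chernCurv h X Y z * (h z)⁻¹ * g z - chernCurv g X Y z)).trace +
      ((h z)⁻¹ * covDeriv h g X z * (g z)⁻¹ *
        (cderiv Y g z - g z * (h z)⁻¹ * cderiv Y h z)).trace := by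
  have hh1 : DifferentiableAt ℝ h z := hh.differentiableAt two_ne_zero
  have hcov : DifferentiableAt ℝ (covDeriv h g Y) z :=
    (differentiableAt_cderiv hg).sub (((differentiableAt_cderiv hh).mul
      (differentiableAt_matrix_inv hh1 hhz)).mul (hg.differentiableAt two_ne_zero))
  have htrace : cderiv Y (fun w => ((h w)⁻¹ * g w).trace) =ᶠ[𝓝 z]
      fun w => ((h w)⁻¹ * covDeriv h g Y w).trace := by
    filter_upwards [hh.eventually (by simp), hg.eventually (by simp),
      hh.continuousAt.eventually_mem (Units.isOpen.mem_nhds hhz)] with w hhw hgw hw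
    exact cderiv_trace_inv_mul (hhw.differentiableAt two_ne_zero)
      (hgw.differentiableAt two_ne_zero) hw
  rw [cderiv_congr htrace, cderiv_trace_inv_mul hh1 hcov hhz, covDeriv_covDeriv hh hg hhz hgz]
  have hswap : ((h z)⁻¹ * (cderiv Y h z * (h z)⁻¹ * covDeriv h g X z)).trace =
      ((h z)⁻¹ * covDeriv h g X z * (h z)⁻¹ * cderiv Y h z).trace := by
    rw [mul_assoc (cderiv Y h z), ← mul_assoc, trace_mul_comm]
    simp only [mul_assoc]
  have hcancel (A : Matrix ι ι ℂ) : (g z)⁻¹ * (g z * A) = A :=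
    nonsing_inv_mul_cancel_left _ _ ((isUnit_iff_isUnit_det _).1 hgz)
  simp only [mul_add, mul_sub, trace_add, trace_sub, mul_assoc, hcancel] at hswap ⊢
  rw [hswap]
  abel

end MatrixValuedFunctions

section KahlerMetrics

open Matrix
open scoped Matrix.Norms.L2Operator

variable {n : ℕ} {Ω : Set (Cn n)} {g h : Cn n → Matrix (Fin n) (Fin n) ℂ} {z : Cn n}

/-- The direction in which `cderiv` is the Wirtinger derivative `∂/∂z_k`. -/
def holDir (k : Fin n) : Cn n × Cn n :=
  (Pi.single k (1 / 2), -Pi.single k (Complex.I / 2))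

/-- The direction in which `cderiv` is the Wirtinger derivative `∂/∂z̄_k`. -/
def antiholDir (k : Fin n) : Cn n × Cn n :=
  ((holDir k).1, -(holDir k).2)

lemma single_div_two (k : Fin n) (c : ℂ) :
    (Pi.single k (c / 2) : Cn n) = (1 / 2 : ℝ) • Pi.single k c := by
  simp [← Pi.single_smul', div_eq_inv_mul]

lemma wder_eq_cderiv (k : Fin n) : wder k = cderiv (holDir k) := by
  funext F z
  simp only [wder, cderiv, holDir, single_div_two, map_smul, map_neg, Complex.real_smul,
    smul_eq_mul]
  push_cast
  ring

lemma wbar_eq_cderiv (k : Fin n) : wbar k = cderiv (antiholDir k) := by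
  funext F z
  simp only [wbar, cderiv, antiholDir, holDir, neg_neg, single_div_two, map_smul,
    Complex.real_smul, smul_eq_mul]
  push_cast
  ring

/-- The complex Hessian `∂_i ∂̄_j F`. -/
def complexHessian (F : Cn n → ℂ) (z : Cn n) : Matrix (Fin n) (Fin n) ℂ :=
  of fun i j => cderiv (holDir i) (cderiv (antiholDir j) F) z

lemma cLap_eq_re_trace (v : Cn n → ℝ) :
    cLap g v z = ((g z)⁻¹ * complexHessian (fun w => (v w : ℂ)) z).trace.re := by
  simp only [cLap, trace_mul_eq_sum_sum, complexHessian, of_apply, wder_eq_cderiv, wbar_eq_cderiv]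

lemma complexHessian_congr {F G : Cn n → ℂ} (hFG : F =ᶠ[𝓝 z] G) :
    complexHessian F z = complexHessian G z := by
  ext i j
  exact cderiv_congr (hFG.eventually_nhds.mono fun _ hw => cderiv_congr hw)

lemma complexHessian_log {T : Cn n → ℂ} (hT : ContDiffAt ℝ 2 T z)
    (hz : T z ∈ Complex.slitPlane) :
    complexHessian (fun w => Complex.log (T w)) z = (T z)⁻¹ • (complexHessian T z - (T z)⁻¹ •
      vecMulVec (fun k => cderiv (holDir k) T z) (fun l => cderiv (antiholDir l) T z)) := by
  ext k l
  exact cderiv_cderiv_log hT hz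

lemma curvT_eq_chernCurv_apply (hg : ContDiffAt ℝ 2 g z) (i j k l : Fin n) :
    curvT g z i j k l = chernCurv g (holDir k) (antiholDir l) z i j := by
  have hg1 : DifferentiableAt ℝ g z := hg.differentiableAt two_ne_zero
  have hwbar : cderiv (antiholDir l) (fun w => g w i j) =ᶠ[𝓝 z]
      fun w => cderiv (antiholDir l) g w i j :=
    (hg.eventually (by simp)).mono fun w hw => cderiv_apply (hw.differentiableAt two_ne_zero) i j
  simp only [curvT, wder_eq_cderiv, wbar_eq_cderiv, cderiv_apply hg1, cderiv_congr hwbar,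
    cderiv_apply (differentiableAt_cderiv hg), chernCurv, Matrix.add_apply, Matrix.neg_apply,
    mul_apply, Finset.sum_mul]
  simp only [mul_comm ((g z)⁻¹ _ _)]

lemma IsKahlerMetricOn.contDiffAt (hg : IsKahlerMetricOn g Ω) (hΩ : IsOpen Ω) (hz : z ∈ Ω) :
    ContDiffAt ℝ 2 g z :=
  contDiffAt_matrix fun i j =>
    contDiffAt_infty.1 ((hg.smooth i j).contDiffAt (hΩ.mem_nhds hz)) 2

lemma IsKahlerMetricOn.isUnit (hg : IsKahlerMetricOn g Ω) (hz : z ∈ Ω) : IsUnit (g z) :=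
  (hg.posdef z hz).isUnit

lemma IsKahlerMetricOn.eventually_isHermitian (hg : IsKahlerMetricOn g Ω) (hΩ : IsOpen Ω)
    (hz : z ∈ Ω) : ∀ᶠ w in 𝓝 z, (g w).IsHermitian :=
  (hΩ.eventually_mem hz).mono fun w hw => (hg.posdef w hw).isHermitian

lemma IsKahlerMetricOn.cderiv_holDir_symm (hg : IsKahlerMetricOn g Ω) (hΩ : IsOpen Ω)
    (hz : z ∈ Ω) (i j k : Fin n) :
    cderiv (holDir k) g z i j = cderiv (holDir i) g z k j := by
  have hg1 : DifferentiableAt ℝ g z := (hg.contDiffAt hΩ hz).differentiableAt two_ne_zero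
  simpa only [wder_eq_cderiv, cderiv_apply hg1] using hg.kahler z hz i j k

lemma IsKahlerMetricOn.cderiv_antiholDir_symm (hg : IsKahlerMetricOn g Ω) (hΩ : IsOpen Ω)
    (hz : z ∈ Ω) (i j l : Fin n) :
    cderiv (antiholDir l) g z i j = cderiv (antiholDir j) g z i l := by
  have hconj (l : Fin n) : cderiv (antiholDir l) g z = (cderiv (holDir l) g z)ᴴ :=
    (cderiv_conjTranspose (hg.eventually_isHermitian hΩ hz)).symm
  rw [hconj, hconj, conjTranspose_apply, conjTranspose_apply, hg.cderiv_holDir_symm hΩ hz]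

lemma IsKahlerMetricOn.cderiv_cderiv_symm (hg : IsKahlerMetricOn g Ω) (hΩ : IsOpen Ω)
    (hz : z ∈ Ω) (i j k l : Fin n) :
    cderiv (holDir k) (cderiv (antiholDir l) g) z i j =
      cderiv (holDir i) (cderiv (antiholDir j) g) z k l := by
  have hgz := hg.contDiffAt hΩ hz
  have hhol (i j k l : Fin n) : cderiv (antiholDir l) (cderiv (holDir k) g) z i j =
      cderiv (antiholDir l) (cderiv (holDir i) g) z k j := by
    rw [← cderiv_apply (differentiableAt_cderiv hgz), ← cderiv_apply (differentiableAt_cderiv hgz)]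
    exact cderiv_congr ((hΩ.eventually_mem hz).mono fun w hw => hg.cderiv_holDir_symm hΩ hw i j k)
  have hanti : cderiv (holDir i) (cderiv (antiholDir l) g) z k j =
      cderiv (holDir i) (cderiv (antiholDir j) g) z k l := by
    rw [← cderiv_apply (differentiableAt_cderiv hgz), ← cderiv_apply (differentiableAt_cderiv hgz)]
    exact cderiv_congr
      ((hΩ.eventually_mem hz).mono fun w hw => hg.cderiv_antiholDir_symm hΩ hw k j l)
  rw [cderiv_comm hgz, hhol, ← cderiv_comm hgz, hanti]

lemma IsKahlerMetricOn.chernCurv_pair_symm (hg : IsKahlerMetricOn g Ω) (hΩ : IsOpen Ω)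
    (hz : z ∈ Ω) (i j k l : Fin n) :
    chernCurv g (holDir k) (antiholDir l) z i j = chernCurv g (holDir i) (antiholDir j) z k l := by
  simp only [chernCurv, Matrix.add_apply, Matrix.neg_apply, mul_apply,
    hg.cderiv_cderiv_symm hΩ hz i j k l, hg.cderiv_holDir_symm hΩ hz i _ k,
    hg.cderiv_antiholDir_symm hΩ hz _ j l]

lemma IsKahlerMetricOn.ricciM_apply (hg : IsKahlerMetricOn g Ω) (hΩ : IsOpen Ω) (hz : z ∈ Ω)
    (i j : Fin n) :
    RicciM g z i j = ((g z)⁻¹ * chernCurv g (holDir i) (antiholDir j) z).trace := by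
  have hdet : (g z).det ∈ Complex.slitPlane :=
    Or.inl (Complex.pos_iff.1 (hg.posdef z hz).det_pos).1
  simp only [RicciM, of_apply, wder_eq_cderiv, wbar_eq_cderiv]
  rw [cderiv_cderiv_log_det (hg.contDiffAt hΩ hz) hdet, neg_neg]

lemma IsKahlerMetricOn.ricciM_eq_sum_chernCurv (hg : IsKahlerMetricOn g Ω) (hΩ : IsOpen Ω)
    (hz : z ∈ Ω) :
    RicciM g z = ∑ k, ∑ l, (g z)⁻¹ l k • chernCurv g (holDir k) (antiholDir l) z := by
  ext i j
  simp only [hg.ricciM_apply hΩ hz, trace_mul_eq_sum_sum, Matrix.sum_apply, Matrix.smul_apply,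
    smul_eq_mul, hg.chernCurv_pair_symm hΩ hz i j]

lemma complexHessian_trace_inv_mul (hh : IsKahlerMetricOn h Ω) (hg : IsKahlerMetricOn g Ω)
    (hΩ : IsOpen Ω) (hz : z ∈ Ω) :
    complexHessian (fun w => ((h w)⁻¹ * g w).trace) z =
      of (fun k l => ((h z)⁻¹ * chernCurv h (holDir k) (antiholDir l) z * ((h z)⁻¹ * g z)).trace) -
      of (fun k l => ((h z)⁻¹ * chernCurv g (holDir k) (antiholDir l) z).trace) +
      traceGram (h z)⁻¹ (g z)⁻¹ fun k => covDeriv h g (holDir k) z := by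
  ext k l
  simp only [complexHessian, of_apply, Matrix.add_apply, Matrix.sub_apply, traceGram]
  rw [cderiv_cderiv_trace_inv_mul (hh.contDiffAt hΩ hz) (hg.contDiffAt hΩ hz) (hh.isUnit hz)
    (hg.isUnit hz), covDeriv_conjTranspose (hh.eventually_isHermitian hΩ hz)
    (hg.eventually_isHermitian hΩ hz), mul_sub, trace_sub]
  simp only [mul_assoc, antiholDir]

lemma herm_eq_dotProduct (ξ η : Fin n → ℂ) :
    herm g z ξ η = ξ ⬝ᵥ g z *ᵥ star η := by
  simp only [herm, dotProduct, mulVec, Finset.mul_sum, Pi.star_apply]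
  exact Finset.sum_congr rfl fun _ _ => Finset.sum_congr rfl fun _ _ => by ring

/-- The holomorphic bisectional curvature of `g` at `z` is at most `C`. -/
def BisectionalCurvatureLE (g : Cn n → Matrix (Fin n) (Fin n) ℂ) (z : Cn n) (C : ℝ) : Prop :=
  ∀ ξ η : Fin n → ℂ,
    (∑ i, ∑ j, ∑ k, ∑ l, curvT g z i j k l * ξ i * star (ξ j) * η k * star (η l)).re ≤
      C * (herm g z ξ ξ).re * (herm g z η η).re

lemma sum_curvT_eq_dotProduct (hg : ContDiffAt ℝ 2 g z) (ξ η : Fin n → ℂ) :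
    ∑ i, ∑ j, ∑ k, ∑ l, curvT g z i j k l * ξ i * star (ξ j) * η k * star (η l) =
      ξ ⬝ᵥ (∑ k, ∑ l, (η k * star (η l)) • chernCurv g (holDir k) (antiholDir l) z) *ᵥ star ξ := by
  simp only [curvT_eq_chernCurv_apply hg, dotProduct, mulVec, Matrix.sum_apply, Matrix.smul_apply,
    Pi.star_apply, Finset.mul_sum, Finset.sum_mul, smul_eq_mul]
  exact Finset.sum_congr rfl fun _ _ => Finset.sum_congr rfl fun _ _ =>
    Finset.sum_congr rfl fun _ _ => Finset.sum_congr rfl fun _ _ => by ring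

lemma BisectionalCurvatureLE.re_trace_chernCurv_le {C : ℝ} (hC : BisectionalCurvatureLE g z C)
    (hg : ContDiffAt ℝ 2 g z) {H : Matrix (Fin n) (Fin n) ℂ} (hH : H.PosSemidef) :
    (H * of fun k l => (H * chernCurv g (holDir k) (antiholDir l) z).trace).trace.re ≤
      C * (H * g z).trace.re * (H * g z).trace.re := by
  refine re_trace_mul_of_trace_mul_le hH hH fun x y => ?_
  have hxy := hC (star x) (star y)
  rw [sum_curvT_eq_dotProduct hg] at hxy
  simp only [herm_eq_dotProduct, star_star, Pi.star_apply] at hxy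
  exact hxy

lemma IsKahlerMetricOn.neg_mul_le_re_trace_ricciM (hh : IsKahlerMetricOn h Ω)
    (hz : z ∈ Ω) {A : Matrix (Fin n) (Fin n) ℂ} (hA : A.PosSemidef) {K : ℝ}
    (hK : (RicciM h z + K • h z).PosSemidef) :
    -K * ((h z)⁻¹ * A).trace.re ≤ ((h z)⁻¹ * RicciM h z * ((h z)⁻¹ * A)).trace.re := by
  set H := (h z)⁻¹ with hH
  have hHA : (H * A * H).PosSemidef := by
    simpa only [hH, (hh.posdef z hz).isHermitian.inv.eq] using hA.mul_mul_conjTranspose_same H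
  have hHh : H * h z = 1 := nonsing_inv_mul _ ((isUnit_iff_isUnit_det _).1 (hh.isUnit hz))
  have hRic : (H * A * H * RicciM h z).trace = (H * RicciM h z * (H * A)).trace := by
    rw [trace_mul_comm (H * RicciM h z)]
    simp only [mul_assoc]
  have hnonneg := (Complex.le_def.1 (trace_mul_nonneg_of_posSemidef hHA hK)).1
  rw [mul_add, trace_add, Matrix.mul_smul, trace_smul, hRic, mul_assoc (H * A), hHh, mul_one,
    Complex.add_re, Complex.smul_re, smul_eq_mul, Complex.zero_re] at hnonneg
  linarith

lemma le_re_trace_complexHessian (hh : IsKahlerMetricOn h Ω) (hg : IsKahlerMetricOn g Ω)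
    (hΩ : IsOpen Ω) (hz : z ∈ Ω) {K C : ℝ} (hK : (RicciM h z + K • h z).PosSemidef)
    (hC : BisectionalCurvatureLE g z C) :
    -K * ((h z)⁻¹ * g z).trace.re - C * ((h z)⁻¹ * g z).trace.re * ((h z)⁻¹ * g z).trace.re ≤
      ((h z)⁻¹ * complexHessian (fun w => ((h w)⁻¹ * g w).trace) z).trace.re -
      ((h z)⁻¹ * traceGram (h z)⁻¹ (g z)⁻¹ fun k => covDeriv h g (holDir k) z).trace.re := by
  rw [complexHessian_trace_inv_mul hh hg hΩ hz, mul_add, mul_sub, trace_add, trace_sub,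
    trace_mul_of_trace_mul_mul, ← hh.ricciM_eq_sum_chernCurv hΩ hz, Complex.add_re,
    Complex.sub_re, add_sub_cancel_right]
  exact sub_le_sub (hh.neg_mul_le_re_trace_ricciM hz (hg.posdef z hz).posSemidef hK)
    (hC.re_trace_chernCurv_le (hg.contDiffAt hΩ hz) (hh.posdef z hz).inv.posSemidef)

lemma cderiv_antiholDir_trace_inv_mul (hh : IsKahlerMetricOn h Ω) (hg : IsKahlerMetricOn g Ω)
    (hΩ : IsOpen Ω) (hz : z ∈ Ω) (l : Fin n) :
    cderiv (antiholDir l) (fun w => ((h w)⁻¹ * g w).trace) z =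
      ((h z)⁻¹ * (covDeriv h g (holDir l) z)ᴴ).trace := by
  have hreal : (fun w => star ((h w)⁻¹ * g w).trace) =ᶠ[𝓝 z] fun w => ((h w)⁻¹ * g w).trace :=
    (hΩ.eventually_mem hz).mono fun w hw => by
      simp only [star_trace_mul_of_isHermitian (hh.posdef w hw).isHermitian.inv,
        (hg.posdef w hw).isHermitian.eq]
  rw [← cderiv_congr hreal, antiholDir, cderiv_star, cderiv_trace_inv_mul
    ((hh.contDiffAt hΩ hz).differentiableAt two_ne_zero)
    ((hg.contDiffAt hΩ hz).differentiableAt two_ne_zero) (hh.isUnit hz),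
    star_trace_mul_of_isHermitian (hh.posdef z hz).isHermitian.inv]

lemma contDiffAt_trace_inv_mul (hh : IsKahlerMetricOn h Ω) (hg : IsKahlerMetricOn g Ω)
    (hΩ : IsOpen Ω) (hz : z ∈ Ω) : ContDiffAt ℝ 2 (fun w => ((h w)⁻¹ * g w).trace) z :=
  ((traceLinearMap (Fin n) ℝ ℂ).toContinuousLinearMap.contDiff.contDiffAt).comp z
    ((contDiffAt_matrix_inv (hh.contDiffAt hΩ hz) (hh.isUnit hz)).mul (hg.contDiffAt hΩ hz))

lemma trace_inv_mul_pos [NeZero n] (hh : IsKahlerMetricOn h Ω) (hg : IsKahlerMetricOn g Ω)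
    (hz : z ∈ Ω) : 0 < ((h z)⁻¹ * g z).trace :=
  trace_mul_pos_of_posDef (hh.posdef z hz).inv (hg.posdef z hz)

lemma cLap_log_trace_inv_mul [NeZero n] (hh : IsKahlerMetricOn h Ω) (hg : IsKahlerMetricOn g Ω)
    (hΩ : IsOpen Ω) (hz : z ∈ Ω) :
    cLap h (fun w => Real.log ((h w)⁻¹ * g w).trace.re) z =
      (((h z)⁻¹ * complexHessian (fun w => ((h w)⁻¹ * g w).trace) z).trace.re -
        ((h z)⁻¹ * ((h z)⁻¹ * g z).trace⁻¹ • vecMulVec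
          (fun k => ((h z)⁻¹ * covDeriv h g (holDir k) z).trace)
          (fun l => ((h z)⁻¹ * (covDeriv h g (holDir l) z)ᴴ).trace)).trace.re) /
      ((h z)⁻¹ * g z).trace.re := by
  have hlog : (fun w => (Real.log ((h w)⁻¹ * g w).trace.re : ℂ)) =ᶠ[𝓝 z]
      fun w => Complex.log ((h w)⁻¹ * g w).trace :=
    (hΩ.eventually_mem hz).mono fun w hw => by
      have hpos := trace_inv_mul_pos hh hg hw
      beta_reduce
      rw [Complex.ofReal_log (Complex.pos_iff.1 hpos).1.le, ← Complex.eq_re_of_ofReal_le hpos.le]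
  have hpos := trace_inv_mul_pos hh hg hz
  have hdiv (a : ℂ) : (((h z)⁻¹ * g z).trace⁻¹ * a).re = a.re / ((h z)⁻¹ * g z).trace.re := by
    rw [← Complex.div_ofReal_re, ← Complex.eq_re_of_ofReal_le hpos.le, inv_mul_eq_div]
  rw [cLap_eq_re_trace, complexHessian_congr hlog, complexHessian_log
    (contDiffAt_trace_inv_mul hh hg hΩ hz) (Or.inl (Complex.pos_iff.1 hpos).1)]
  simp only [cderiv_antiholDir_trace_inv_mul hh hg hΩ hz, cderiv_trace_inv_mul
    ((hh.contDiffAt hΩ hz).differentiableAt two_ne_zero)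
    ((hg.contDiffAt hΩ hz).differentiableAt two_ne_zero) (hh.isUnit hz)]
  rw [Matrix.mul_smul, trace_smul, smul_eq_mul, hdiv, mul_sub, trace_sub, Complex.sub_re]

end KahlerMetrics

theorem chern_lu_inequality_general {n : ℕ} [NeZero n] {Ω : Set (Cn n)} (hΩ : IsOpen Ω)
    {g gt : Cn n → Matrix (Fin n) (Fin n) ℂ} (hg : IsKahlerMetricOn g Ω)
    (hgt : IsKahlerMetricOn gt Ω) {K C : ℝ} {z : Cn n} (hz : z ∈ Ω)
    (hric : (RicciM gt z + K • gt z).PosSemidef) (hbisec : BisectionalCurvatureLE g z C) :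
    -K - C * (Matrix.trace ((gt z)⁻¹ * g z)).re ≤
      cLap gt (fun w => Real.log ((Matrix.trace ((gt w)⁻¹ * g w)).re)) z := by
  have hH := (hgt.posdef z hz).inv.posSemidef
  have hgrad := (Complex.le_def.1 <| trace_mul_nonneg_of_posSemidef hH <|
    posSemidef_traceGram_inv_sub hH (hg.posdef z hz) fun k => covDeriv gt g (holDir k) z).1
  rw [mul_sub, Matrix.trace_sub, Complex.sub_re, Complex.zero_re] at hgrad
  rw [cLap_log_trace_inv_mul hgt hg hΩ hz,
    le_div_iff₀ (Complex.pos_iff.1 (trace_inv_mul_pos hgt hg hz)).1]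
  linarith [le_re_trace_complexHessian hgt hg hΩ hz hric hbisec]

/-- **Chern–Lu inequality (Theorem 4.3).**  Let `ω̃` (with matrix `gt`) and `ω` (with matrix
`g`) be Kähler metrics on `Ω ⊆ ℂⁿ` with `Ric ω̃ ≥ −ω̃` and holomorphic bisectional curvature
of `ω` bounded above by `C₁ > 0`.  Then `v = log tr_{ω̃} ω` satisfies
`Δ_{ω̃} v ≥ −1 − 2 C₁ e^v` on `Ω`. -/
theorem chern_lu_inequality {n : ℕ} (Ω : Set (Cn n)) (hΩ : IsOpen Ω)
    (g gt : Cn n → Matrix (Fin n) (Fin n) ℂ)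
    (hg : IsKahlerMetricOn g Ω) (hgt : IsKahlerMetricOn gt Ω)
    (C₁ : ℝ) (hC₁ : 0 < C₁)
    -- `Ric ω̃ ≥ −ω̃`:
    (hric : ∀ z ∈ Ω, (RicciM gt z + gt z).PosSemidef)
    -- bisectional curvature of `ω` bounded above by `C₁`:
    (hbisec : ∀ z ∈ Ω, ∀ ξ η : Fin n → ℂ,
      (∑ i : Fin n, ∑ j : Fin n, ∑ k : Fin n, ∑ l : Fin n,
          curvT g z i j k l * ξ i * star (ξ j) * η k * star (η l)).re ≤
        C₁ * (herm g z ξ ξ).re * (herm g z η η).re) :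
    ∀ z ∈ Ω,
      -1 - 2 * C₁ * Real.exp (Real.log ((Matrix.trace ((gt z)⁻¹ * g z)).re)) ≤
        cLap gt (fun w => Real.log ((Matrix.trace ((gt w)⁻¹ * g w)).re)) z := by
  intro z hz
  rcases eq_zero_or_neZero n with rfl | _
  · have hlap : cLap gt (fun w => Real.log ((Matrix.trace ((gt w)⁻¹ * g w)).re)) z = 0 := by
      simp [cLap]
    rw [hlap]
    linarith [mul_pos hC₁ (Real.exp_pos (Real.log ((Matrix.trace ((gt z)⁻¹ * g z)).re)))]
  · have hT := (Complex.pos_iff.1 (trace_inv_mul_pos hgt hg hz)).1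
    have hlu := chern_lu_inequality_general hΩ hg hgt hz (K := 1) (by simpa using hric z hz)
      (hbisec z hz)
    rw [Real.exp_log hT]
    linarith [mul_pos hC₁ hT]
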